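/- Let p be an odd prime, k a field of characteristic p, and n ≥ 1 an integer such that p does not divide n+1 (equivalently, n is not of the form kp−1). Let A = k[x]/(x^{n+1}) and B = A ⊗_k A. The graded ring HH^*(A;A) = ⊕_{m≥0} Ext^m_B(A,A), with the Yoneda (composition) product, is isomorphic as a graded ring to k[x,u,t]/(x^{n+1}, u², x^n t, u x^n), where x, u, t have cohomological degrees 0, 1, 2 respectively. -/

import Mathlib

open Polynomial TensorProduct CategoryTheory

noncomputable section

/-- `A = k[x]/(x^{n+1})`, the truncated polynomial ring over the field `k`. -/
abbrev A (k : Type) [Field k] (n : ℕ) : Type := AdjoinRoot ((X : k[X]) ^ (n + 1))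

/-- `B = A ⊗_k A`. -/
abbrev B (k : Type) [Field k] (n : ℕ) : Type := A k n ⊗[k] A k n

/-- `A` is a `B`-module via the multiplication map `μ(a ⊗ b) = ab`. -/
instance (k : Type) [Field k] (n : ℕ) : Algebra (B k n) (A k n) :=
  (Algebra.TensorProduct.lmul' k (S := A k n)).toRingHom.toAlgebra

instance (k : Type) [Field k] (n : ℕ) : HasDerivedCategory.{1} (ModuleCat.{0} (B k n)) :=
  HasDerivedCategory.standard _

instance (k : Type) [Field k] (n : ℕ) : HasExt.{1} (ModuleCat.{0} (B k n)) :=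
  hasExt_of_hasDerivedCategory _

/-- `A` as an object of the category of `B`-modules. -/
def M (k : Type) [Field k] (n : ℕ) : ModuleCat.{0} (B k n) := ModuleCat.of (B k n) (A k n)

/-- The ideal `(x^{n+1}, u², xⁿt, uxⁿ)` of `k[x,u,t]`, where `x = X 0`, `u = X 1`,
`t = X 2`. -/
def I (k : Type) [Field k] (n : ℕ) : Ideal (MvPolynomial (Fin 3) k) :=
  Ideal.span {MvPolynomial.X 0 ^ (n + 1), MvPolynomial.X 1 ^ 2,
    MvPolynomial.X 0 ^ n * MvPolynomial.X 2,
    MvPolynomial.X 1 * MvPolynomial.X 0 ^ n}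

/-- The ring `k[x,u,t]/(x^{n+1}, u², xⁿt, uxⁿ)`. -/
abbrev R (k : Type) [Field k] (n : ℕ) : Type := MvPolynomial (Fin 3) k ⧸ I k n

/-- The degree-`m` component of `R k n`, for the grading in which `x, u, t` have
cohomological degrees `0, 1, 2` respectively. -/
def G (k : Type) [Field k] (n m : ℕ) : Submodule k (R k n) :=
  (MvPolynomial.weightedHomogeneousSubmodule k (![0, 1, 2] : Fin 3 → ℕ) m).map
    (Ideal.Quotient.mkₐ k (I k n)).toLinearMap


namespace HHAux

section concrete
variable (k : Type) [Field k] (n : ℕ)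

abbrev rt : A k n := AdjoinRoot.root _

lemma rt_pow : rt k n ^ (n + 1) = 0 := by
  have := AdjoinRoot.eval₂_root ((X : k[X]) ^ (n + 1))
  simpa using this

def Psi : (A k n)[X] →+* B k n :=
  eval₂RingHom (Algebra.TensorProduct.includeLeftRingHom) (1 ⊗ₜ rt k n)

lemma Psi_C (a : A k n) : Psi k n (C a) = a ⊗ₜ 1 := by simp [Psi]

lemma Psi_X : Psi k n X = 1 ⊗ₜ rt k n := by simp [Psi]

lemma Psi_map (q : k[X]) : Psi k n (q.map (algebraMap k (A k n))) = 1 ⊗ₜ AdjoinRoot.mk _ q := by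
  induction q using Polynomial.induction_on' with
  | add p q hp hq => simp only [Polynomial.map_add, map_add, hp, hq, TensorProduct.tmul_add]
  | monomial i a =>
    rw [← C_mul_X_pow_eq_monomial]
    simp only [Polynomial.map_mul, map_C, Polynomial.map_pow, map_X, map_mul, map_pow, Psi_C, Psi_X,
      AdjoinRoot.mk_X, AdjoinRoot.mk_C]
    rw [Algebra.TensorProduct.tmul_pow, Algebra.TensorProduct.tmul_mul_tmul, one_pow, mul_one,
      one_mul, Algebra.algebraMap_eq_smul_one, TensorProduct.smul_tmul]
    rw [Algebra.smul_def]; rfl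

lemma Psi_surj : Function.Surjective (Psi k n) := by
  intro b
  induction b using TensorProduct.induction_on with
  | zero => exact ⟨0, map_zero _⟩
  | add x y hx hy =>
    obtain ⟨p, rfl⟩ := hx
    obtain ⟨q, rfl⟩ := hy
    exact ⟨p + q, map_add _ _ _⟩
  | tmul x y =>
    obtain ⟨q, rfl⟩ := AdjoinRoot.mk_surjective y
    refine ⟨C x * q.map (algebraMap k (A k n)), ?_⟩
    rw [map_mul, Psi_C, Psi_map, Algebra.TensorProduct.tmul_mul_tmul, mul_one, one_mul]

lemma Psi_ker (P : (A k n)[X]) : Psi k n P = 0 ↔ X ^ (n + 1) ∣ P := by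
  constructor
  · intro h
    let f : A k n →ₐ[k] AdjoinRoot ((X : (A k n)[X]) ^ (n + 1)) :=
      IsScalarTower.toAlgHom k (A k n) _
    let g : A k n →ₐ[k] AdjoinRoot ((X : (A k n)[X]) ^ (n + 1)) :=
      AdjoinRoot.liftAlgHom _ (Algebra.ofId k _) (AdjoinRoot.root _) (by
        have := AdjoinRoot.eval₂_root ((X : (A k n)[X]) ^ (n + 1))
        simpa using this)
    let Φ := Algebra.TensorProduct.productMap f g
    have e : (Φ : B k n →+* _).comp (Psi k n) = AdjoinRoot.mk ((X : (A k n)[X]) ^ (n + 1)) := by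
      refine Polynomial.ringHom_ext ?_ ?_
      · intro a
        simp only [RingHom.comp_apply, Psi_C]
        simp [Φ, f]
      · simp only [RingHom.comp_apply, Psi_X]
        simp [Φ, g]
    rw [← AdjoinRoot.mk_eq_zero, ← e, RingHom.comp_apply, h, map_zero]
  · rintro ⟨Q, rfl⟩
    rw [map_mul, map_pow, Psi_X, Algebra.TensorProduct.tmul_pow, rt_pow, TensorProduct.tmul_zero,
      zero_mul]

def mu : B k n →ₗ[B k n] A k n := Algebra.linearMap _ _

lemma mu_mul (a b : B k n) : mu k n (a * b) = mu k n a * mu k n b := 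
  map_mul (algebraMap (B k n) (A k n)) a b

lemma mu_tmul (a b : A k n) : mu k n (a ⊗ₜ b) = a * b := 
  Algebra.TensorProduct.lmul'_apply_tmul a b

lemma mu_Psi (P : (A k n)[X]) : mu k n (Psi k n P) = P.eval (rt k n) := by
  have e : (algebraMap (B k n) (A k n)).comp (Psi k n) = evalRingHom (rt k n) := by
    refine Polynomial.ringHom_ext ?_ ?_
    · intro a
      rw [RingHom.comp_apply, Psi_C]
      exact (mu_tmul k n a 1).trans (by simp)
    · rw [RingHom.comp_apply, Psi_X]
      exact (mu_tmul k n 1 _).trans (by simp)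
  exact DFunLike.congr_fun e P

lemma mu_surj : Function.Surjective (mu k n) := fun a => ⟨a ⊗ₜ 1, by rw [mu_tmul, mul_one]⟩

def dd : B k n := Psi k n (X - C (rt k n))

lemma mu_ker (b : B k n) : mu k n b = 0 ↔ dd k n ∣ b := by
  constructor
  · obtain ⟨P, rfl⟩ := Psi_surj k n b
    rw [mu_Psi]
    intro h
    exact map_dvd (Psi k n) (dvd_iff_isRoot.2 h)
  · rintro ⟨c, rfl⟩
    rw [mu_mul, dd, mu_Psi]
    simp

lemma rt_mul (a : A k n) : rt k n * a = 0 ↔ ∃ c, a = rt k n ^ n * c := by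
  constructor
  · obtain ⟨q, rfl⟩ := AdjoinRoot.mk_surjective a
    rw [rt, ← AdjoinRoot.mk_X, ← map_mul, AdjoinRoot.mk_eq_zero]
    intro h
    rw [pow_succ'] at h
    obtain ⟨c, rfl⟩ := (mul_dvd_mul_iff_left (X_ne_zero)).1 h
    exact ⟨AdjoinRoot.mk _ c, by simp⟩
  · rintro ⟨c, rfl⟩
    rw [← mul_assoc, ← pow_succ', rt_pow, zero_mul]

lemma rt_pow_mul (a : A k n) : rt k n ^ n * a = 0 ↔ ∃ c, a = rt k n * c := by
  constructor
  · obtain ⟨q, rfl⟩ := AdjoinRoot.mk_surjective a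
    rw [rt, ← AdjoinRoot.mk_X, ← map_pow, ← map_mul, AdjoinRoot.mk_eq_zero]
    intro h
    rw [pow_succ] at h
    obtain ⟨c, rfl⟩ := (mul_dvd_mul_iff_left (pow_ne_zero _ X_ne_zero)).1 h
    exact ⟨AdjoinRoot.mk _ c, by simp⟩
  · rintro ⟨c, rfl⟩
    rw [← mul_assoc, ← pow_succ, rt_pow, zero_mul]

lemma concrete (hn : 1 ≤ n) (h2 : (2 : k) ≠ 0) (hn1 : ((n + 1 : ℕ) : k) ≠ 0) :
    ∃ N v : B k n,
      (∀ b, dd k n * b = 0 ↔ N ∣ b) ∧ (∀ b, N * b = 0 ↔ dd k n ∣ b) ∧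
      dd k n * v = Psi k n (C (rt k n)) * N ∧
      (∀ b, dd k n ∣ N * b ↔ ∃ c, dd k n ∣ b - Psi k n (C (rt k n)) * c) ∧
      (∀ b, dd k n ∣ Psi k n (C (rt k n)) * b ↔ ∃ c, dd k n ∣ b - N * c) ∧
      dd k n ∣ Psi k n (C (rt k n)) * v := by
  set r := rt k n with hr
  have hr0 : r ^ (n + 1) = 0 := rt_pow k n
  obtain ⟨Q, hQ⟩ : (X - C r) ∣ (X : (A k n)[X]) ^ (n + 1) := by
    rw [dvd_iff_isRoot]; simpa using hr0
  have hFm : (X - C r).Monic := monic_X_sub_C r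
  have hXm : ((X : (A k n)[X]) ^ (n + 1)).Monic := monic_X_pow _
  -- derivatives
  have d1 := congrArg derivative hQ
  have d2 := congrArg derivative d1
  have hQr : Q.eval r = (n + 1 : ℕ) * r ^ n := by
    have := congrArg (eval r) d1
    simpa using this.symm
  have hdQr : 2 * (derivative Q).eval r = (n + 1 : ℕ) * (n * r ^ (n - 1)) := by
    have := congrArg (eval r) d2
    simp [derivative_X_pow] at this
    push_cast
    rw [this]; ring
  obtain ⟨V, hV⟩ : (X - C r) ∣ C r * Q := by
    rw [dvd_iff_isRoot, IsRoot, eval_mul, eval_C, hQr, mul_left_comm, ← pow_succ', hr0, mul_zero]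
  have hVr : V.eval r = r * (derivative Q).eval r := by
    have := congrArg (eval r) (congrArg derivative hV)
    simpa using this.symm
  have u2 : IsUnit (2 : A k n) := by
    have := (IsUnit.mk0 _ h2).map (algebraMap k (A k n))
    rwa [map_ofNat] at this
  have un : IsUnit ((n + 1 : ℕ) : A k n) := by
    have := (IsUnit.mk0 _ hn1).map (algebraMap k (A k n))
    simpa using this
  have hrV : r * V.eval r = 0 := by
    rw [← u2.mul_right_eq_zero, hVr]
    have : 2 * (r * (r * (derivative Q).eval r)) = r * r * (2 * (derivative Q).eval r) := by ring
    rw [this, hdQr]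
    obtain ⟨m, rfl⟩ := Nat.exists_eq_add_of_le' hn
    rw [Nat.add_sub_cancel]
    linear_combination ((m + 1 + 1 : ℕ) : A k (m + 1)) * ((m + 1 : ℕ) : A k (m + 1)) * hr0
  have dN : dd k n * Psi k n Q = 0 := by
    rw [dd, ← map_mul, ← hQ, Psi_ker]
  have key : ∀ b c : B k n, dd k n ∣ b - c ↔ mu k n b = mu k n c := by
    intro b c
    rw [← mu_ker, map_sub, sub_eq_zero]
  refine ⟨Psi k n Q, Psi k n V, ?_, ?_, ?_, ?_, ?_, ?_⟩
  · intro b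
    constructor
    · obtain ⟨P, rfl⟩ := Psi_surj k n b
      rw [dd, ← map_mul, Psi_ker, hQ]
      rintro ⟨c, hc⟩
      rw [mul_assoc] at hc
      have : P = Q * c := hFm.isRegular.left hc
      rw [this, map_mul]; exact dvd_mul_right _ _
    · rintro ⟨c, rfl⟩
      rw [← mul_assoc, dN, zero_mul]
  · intro b
    constructor
    · obtain ⟨P, rfl⟩ := Psi_surj k n b
      rw [← map_mul, Psi_ker]
      rintro ⟨c, hc⟩
      have : P = (X - C r) * c := by
        apply hXm.isRegular.left
        change X ^ (n + 1) * P = X ^ (n + 1) * ((X - C r) * c)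
        calc X ^ (n + 1) * P = (X - C r) * (Q * P) := by rw [hQ]; ring
          _ = _ := by rw [hc]; ring
      rw [this, map_mul]; exact dvd_mul_right _ _
    · rintro ⟨c, rfl⟩
      rw [← mul_assoc, mul_comm (Psi k n Q), dN, zero_mul]
  · rw [dd, ← map_mul, ← hV, map_mul]
  · intro b
    simp only [key]
    rw [← mu_ker, mu_mul, mu_Psi, hQr, mul_assoc, un.mul_right_eq_zero, rt_pow_mul]
    constructor
    · rintro ⟨c, hc⟩
      exact ⟨c ⊗ₜ 1, by rw [mu_mul, mu_Psi, mu_tmul, mul_one, hc, eval_C]⟩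
    · rintro ⟨c, hc⟩
      exact ⟨mu k n c, by rw [hc, mu_mul, mu_Psi, eval_C]⟩
  · intro b
    simp only [key]
    rw [← mu_ker, mu_mul, mu_Psi, eval_C, rt_mul]
    constructor
    · rintro ⟨c, hc⟩
      obtain ⟨e, he⟩ := un.exists_right_inv
      refine ⟨(e * c) ⊗ₜ 1, ?_⟩
      rw [mu_mul, mu_Psi, mu_tmul, mul_one, hc, hQr]
      linear_combination (- r ^ n * c) * he
    · rintro ⟨c, hc⟩
      exact ⟨(n + 1 : ℕ) * mu k n c, by rw [hc, mu_mul, mu_Psi, hQr]; ring⟩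
  · rw [← mu_ker, mu_mul, mu_Psi, mu_Psi, eval_C, hrV]

end concrete
end HHAux

namespace HHAux
open Abelian

universe w

lemma fac {S X Y : Type} [CommRing S] [AddCommGroup X] [Module S X] [AddCommGroup Y] [Module S Y]
    (f : S →ₗ[S] X) (hf : Function.Surjective f) (g : S →ₗ[S] Y) (h : ∀ b, f b = 0 → g b = 0) :
    ∃ l : X →ₗ[S] Y, ∀ b, l (f b) = g b := by
  refine ⟨(LinearMap.ker f).liftQ g (fun b hb => h b (LinearMap.mem_ker.1 hb)) ∘ₗ
    (f.quotKerEquivOfSurjective hf).symm.toLinearMap, fun b => ?_⟩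
  have : (f.quotKerEquivOfSurjective hf).symm (f b) = (LinearMap.ker f).mkQ b := by
    rw [LinearEquiv.symm_apply_eq]; rfl
  rw [LinearMap.comp_apply, LinearEquiv.coe_coe, this]
  exact Submodule.liftQ_apply _ _ _

section shift
variable {S : Type} [CommRing S] [HasExt.{w} (ModuleCat.{0} S)]
  {T : ShortComplex (ModuleCat.{0} S)} (hT : T.ShortExact) [Projective T.X₂]
  {Y : ModuleCat.{0} S}

lemma shift_surj {m l : ℕ} (h : 1 + m = l) (β : Ext T.X₃ Y l) :
    ∃ α : Ext T.X₁ Y m, hT.extClass.comp α h = β := by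
  obtain rfl : l = m + 1 := by omega
  apply Ext.contravariant_sequence_exact₃ hT
  apply Ext.eq_zero_of_projective

lemma shift_inj {m l : ℕ} (hm : 1 ≤ m) (h : 1 + m = l) (α : Ext T.X₁ Y m)
    (h0 : hT.extClass.comp α h = 0) : α = 0 := by
  obtain ⟨m, rfl⟩ := Nat.exists_eq_add_of_le' hm
  obtain ⟨x, rfl⟩ := Ext.contravariant_sequence_exact₁ hT _ α h h0
  rw [Ext.eq_zero_of_projective x, Ext.comp_zero]

lemma shift_zero (f : T.X₁ ⟶ Y) :
    hT.extClass.comp (Ext.mk₀ f) (add_zero 1) = 0 ↔ ∃ h : T.X₂ ⟶ Y, T.f ≫ h = f := by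
  constructor
  · intro h0
    obtain ⟨x, hx⟩ := Ext.contravariant_sequence_exact₁ hT _ (Ext.mk₀ f) (add_zero 1) h0
    obtain ⟨x, rfl⟩ := Ext.mk₀_bijective _ _ |>.2 x
    rw [Ext.mk₀_comp_mk₀] at hx
    exact ⟨x, (Ext.mk₀_bijective _ _).1 hx⟩
  · rintro ⟨h, rfl⟩
    rw [← Ext.mk₀_comp_mk₀]
    exact hT.extClass_comp_assoc _
end shift


section abstractExt

variable {S : Type} [CommRing S] [HasExt.{w} (ModuleCat.{0} S)]

lemma ses {X Q : Type} [AddCommGroup X] [Module S X] [AddCommGroup Q] [Module S Q]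
    (c e : S) (hce : ∀ b, c * b = 0 → e ∣ b)
    (f : S →ₗ[S] X) (hf : Function.Surjective f) (hfe : ∀ b, f b = 0 ↔ e ∣ b)
    (q : S →ₗ[S] Q) (hq : Function.Surjective q) (hqc : ∀ b, q b = 0 ↔ c ∣ b)
    (i : X →ₗ[S] S) (hi : ∀ b, i (f b) = c * b) :
    ∃ h : ModuleCat.ofHom i ≫ ModuleCat.ofHom q = 0,
    (ShortComplex.mk (ModuleCat.ofHom i) (ModuleCat.ofHom q) h).ShortExact := by
  have h : ModuleCat.ofHom i ≫ ModuleCat.ofHom q = 0 := by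
    ext a
    obtain ⟨b, rfl⟩ := hf a
    have : q (c * b) = 0 := (hqc _).2 (dvd_mul_right _ _)
    simpa [hi] using this
  refine ⟨h, ?_⟩
  have h1 : Function.Injective i := by
    rw [injective_iff_map_eq_zero]
    intro a ha
    obtain ⟨b, rfl⟩ := hf a
    rw [hi] at ha
    exact (hfe b).2 (hce b ha)
  refine ShortComplex.ShortExact.mk' ?_ ?_ ?_
  · rw [ShortComplex.ShortExact.moduleCat_exact_iff_function_exact]
    intro b
    change q b = 0 ↔ b ∈ Set.range i
    rw [hqc]
    constructor
    · rintro ⟨a, rfl⟩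
      exact ⟨f a, hi a⟩
    · rintro ⟨a, rfl⟩
      obtain ⟨b, rfl⟩ := hf a
      rw [hi]; exact dvd_mul_right _ _
  · exact (ModuleCat.mono_iff_injective _).2 h1
  · exact (ModuleCat.epi_iff_surjective _).2 hq

/-- the periodic family of generators -/
def gen {Z : ModuleCat.{0} S} (t : Ext Z Z 2) (u : Ext Z Z 1) : (m : ℕ) → Ext Z Z m
  | 0 => Ext.mk₀ (𝟙 Z)
  | 1 => u
  | (m + 2) => t.comp (gen t u m) (Nat.add_comm 2 m)

lemma gen_one_mul {Z : ModuleCat.{0} S} (t : Ext Z Z 2) (u : Ext Z Z 1)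
    (huu : u.comp u rfl = 0) (hut : u.comp t (rfl : _ = 3) = t.comp u rfl) :
    ∀ (b c : ℕ) (h : 1 + b = c), u.comp (gen t u b) h = if Odd b then 0 else gen t u c
  | 0, c, h => by
    subst h
    simp [gen]
  | 1, c, h => by
    subst h
    simpa [gen] using huu
  | (b + 2), c, h => by
    obtain rfl : c = (1 + b) + 2 := by omega
    have ih := gen_one_mul t u huu hut b (1 + b) rfl
    have e : Odd (b + 2) ↔ Odd b := by grind
    rw [gen, gen, ← Ext.comp_assoc u t _ (rfl : _ = 3) _ (by omega), hut,
      Ext.comp_assoc t u _ _ (rfl : _ = 1 + b) (by omega), ih]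
    simp only [e]
    split_ifs <;> simp

lemma gen_mul {Z : ModuleCat.{0} S} (t : Ext Z Z 2) (u : Ext Z Z 1)
    (huu : u.comp u rfl = 0) (hut : u.comp t (rfl : _ = 3) = t.comp u rfl) :
    ∀ (a b c : ℕ) (h : a + b = c), (gen t u a).comp (gen t u b) h =
      if Odd a ∧ Odd b then 0 else gen t u c
  | 0, b, c, h => by
    obtain rfl : b = c := by omega
    simp [gen]
  | 1, b, c, h => by
    simpa [gen] using gen_one_mul t u huu hut b c h
  | (a + 2), b, c, h => by
    obtain rfl : c = (a + b) + 2 := by omega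
    have ih := gen_mul t u huu hut a b (a + b) rfl
    have e : Odd (a + 2) ↔ Odd a := by grind
    rw [gen, gen, Ext.comp_assoc t _ _ _ (rfl : _ = a + b) (by omega), ih]
    simp only [e]
    split_ifs <;> simp

theorem ext_struct (d N w v : S)
    (hdN : ∀ b, d * b = 0 ↔ N ∣ b) (hNd : ∀ b, N * b = 0 ↔ d ∣ b) (hv : d * v = w * N)
    {Z : Type} [AddCommGroup Z] [Module S Z] (μ : S →ₗ[S] Z) (hμ : Function.Surjective μ)
    (hμd : ∀ b, μ b = 0 ↔ d ∣ b)
    (hNw : ∀ b, d ∣ N * b ↔ ∃ c, d ∣ b - w * c)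
    (hwN : ∀ b, d ∣ w * b ↔ ∃ c, d ∣ b - N * c)
    (hwv : d ∣ w * v) :
    ∃ g : ∀ m, Ext (ModuleCat.of S Z) (ModuleCat.of S Z) m,
      g 0 = Ext.mk₀ (𝟙 _) ∧ (∀ m α, ∃ b : S, b • g m = α) ∧
      (∀ b : S, b • g 0 = 0 ↔ d ∣ b) ∧
      (∀ m, ∀ b : S, b • g (m + 1) = 0 ↔ d ∣ w * b) ∧
      ∀ a b c (h : a + b = c), (g a).comp (g b) h = if Odd a ∧ Odd b then 0 else g c := by
  let K := S ⧸ Ideal.span {N}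
  let π : S →ₗ[S] K := Submodule.mkQ _
  have hπ : Function.Surjective π := Submodule.mkQ_surjective _
  have hπN : ∀ b, π b = 0 ↔ N ∣ b := fun b => by
    rw [← Ideal.mem_span_singleton]
    exact Submodule.Quotient.mk_eq_zero _
  let mul (c : S) : S →ₗ[S] S := LinearMap.mul S S c
  have dN : d * N = 0 := (hdN _).2 dvd_rfl
  obtain ⟨i1, hi1⟩ := fac μ hμ (mul N) (fun b hb => (hNd b).2 ((hμd b).1 hb))
  obtain ⟨i2, hi2⟩ := fac π hπ (mul d) (fun b hb => (hdN b).2 ((hπN b).1 hb))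
  obtain ⟨κ, hκ⟩ := fac π hπ (μ ∘ₗ mul w) (fun b hb => by
    obtain ⟨c, rfl⟩ := (hπN b).1 hb
    change μ (w * (N * c)) = 0
    rw [hμd, ← mul_assoc, ← hv, mul_assoc]; exact dvd_mul_right _ _)
  obtain ⟨lam, hlam⟩ := fac μ hμ (π ∘ₗ mul v) (fun b hb => by
    obtain ⟨c, rfl⟩ := (hμd b).1 hb
    change π (v * (d * c)) = 0
    rw [hπN, ← mul_assoc, mul_comm v d, hv]; exact ⟨w * c, by ring⟩)
  replace hi1 : ∀ b, i1 (μ b) = N * b := hi1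
  replace hi2 : ∀ b, i2 (π b) = d * b := hi2
  replace hκ : ∀ b, κ (π b) = μ (w * b) := hκ
  replace hlam : ∀ b, lam (μ b) = π (v * b) := hlam
  obtain ⟨z1, h1⟩ := ses N d (fun b => (hNd b).1) μ hμ hμd π hπ hπN i1 hi1
  obtain ⟨z2, h2⟩ := ses d N (fun b => (hdN b).1) π hπ hπN μ hμ hμd i2 hi2
  have : Projective (ModuleCat.of S S) := inferInstance
  -- morphisms of short exact sequences
  have n12 := ShortComplex.ShortExact.extClass_naturality h1 h2
    { τ₁ := ModuleCat.ofHom lam, τ₂ := ModuleCat.ofHom (mul w), τ₃ := ModuleCat.ofHom κ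
      comm₁₂ := by
        ext a
        obtain ⟨b, rfl⟩ := hμ a
        change i2 (lam (μ b)) = w * i1 (μ b)
        rw [hlam, hi2, hi1, ← mul_assoc, hv, mul_assoc]
      comm₂₃ := by
        refine ModuleCat.hom_ext (LinearMap.ext fun b => ?_)
        change μ (w * b) = κ (π b)
        rw [hκ] }
  have n21 := ShortComplex.ShortExact.extClass_naturality h2 h1
    { τ₁ := ModuleCat.ofHom κ, τ₂ := ModuleCat.ofHom (mul v), τ₃ := ModuleCat.ofHom lam
      comm₁₂ := by
        refine ModuleCat.hom_ext (LinearMap.ext fun a => ?_)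
        obtain ⟨b, rfl⟩ := hπ a
        change i1 (κ (π b)) = v * i2 (π b)
        rw [hκ, hi2, hi1, ← mul_assoc, ← mul_assoc, mul_comm v, hv, mul_comm w]
      comm₂₃ := by
        refine ModuleCat.hom_ext (LinearMap.ext fun b => ?_)
        change π (v * b) = lam (μ b)
        rw [hlam] }
  have lk : ModuleCat.ofHom lam ≫ ModuleCat.ofHom κ = 0 := by
    ext a
    obtain ⟨b, rfl⟩ := hμ a
    change κ (lam (μ b)) = 0
    rw [hlam, hκ, hμd, ← mul_assoc]
    exact hwv.mul_right _
  set δ1 : Ext (ModuleCat.of S K) (ModuleCat.of S Z) 1 := h1.extClass with hδ1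
  set δ2 : Ext (ModuleCat.of S Z) (ModuleCat.of S K) 1 := h2.extClass with hδ2
  change δ1.comp (Ext.mk₀ (ModuleCat.ofHom lam)) (add_zero 1) =
    (Ext.mk₀ (ModuleCat.ofHom κ)).comp δ2 (zero_add 1) at n12
  change δ2.comp (Ext.mk₀ (ModuleCat.ofHom κ)) (add_zero 1) =
    (Ext.mk₀ (ModuleCat.ofHom lam)).comp δ1 (zero_add 1) at n21
  let t : Ext (ModuleCat.of S Z) (ModuleCat.of S Z) 2 := δ2.comp δ1 rfl
  let u : Ext (ModuleCat.of S Z) (ModuleCat.of S Z) 1 :=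
    δ2.comp (Ext.mk₀ (ModuleCat.ofHom κ)) (add_zero 1)
  have hut : u.comp t (rfl : _ = 3) = t.comp u rfl := by
    have e1 : (Ext.mk₀ (ModuleCat.ofHom κ)).comp t (zero_add 2) = δ1.comp u rfl := by
      simp only [u, t]
      rw [← Ext.comp_assoc (Ext.mk₀ (ModuleCat.ofHom κ)) δ2 δ1 (zero_add 1) rfl rfl, ← n12,
        Ext.comp_assoc_of_second_deg_zero, n21]
    calc u.comp t (rfl : _ = 3) = δ2.comp ((Ext.mk₀ (ModuleCat.ofHom κ)).comp t (zero_add 2)) rfl :=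
          Ext.comp_assoc_of_second_deg_zero _ _ _ _
      _ = t.comp u rfl := by
          rw [e1]
          exact (Ext.comp_assoc δ2 δ1 u rfl rfl rfl).symm
  have huu : u.comp u rfl = 0 := by
    have e1 : (Ext.mk₀ (ModuleCat.ofHom κ)).comp u (zero_add 1) = 0 := by
      simp only [u]
      rw [← Ext.comp_assoc (Ext.mk₀ (ModuleCat.ofHom κ)) δ2 _ (zero_add 1) rfl rfl, ← n12,
        Ext.comp_assoc_of_second_deg_zero, Ext.mk₀_comp_mk₀, lk, Ext.mk₀_zero, Ext.comp_zero]
    calc u.comp u rfl = δ2.comp ((Ext.mk₀ (ModuleCat.ofHom κ)).comp u (zero_add 1)) rfl :=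
          Ext.comp_assoc_of_second_deg_zero _ _ _ _
      _ = 0 := by rw [e1, Ext.comp_zero]
  have hom0 : ∀ f : ModuleCat.of S Z ⟶ ModuleCat.of S Z, ∃ b : S, f = b • 𝟙 _ := by
    intro f
    obtain ⟨b, hb⟩ := hμ (f.hom (μ 1))
    refine ⟨b, ModuleCat.hom_ext (LinearMap.ext fun a => ?_)⟩
    obtain ⟨c, rfl⟩ := hμ a
    change f.hom (μ c) = b • μ c
    have e : ∀ c, μ c = c • μ 1 := fun c => by rw [← map_smul, smul_eq_mul, mul_one]
    rw [e c, map_smul, ← hb, smul_comm b c, e b]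
  have hid : ∀ b : S, b • 𝟙 (ModuleCat.of S Z) = 0 ↔ d ∣ b := by
    intro b
    rw [← hμd]
    have e : ∀ c, μ c = c • μ 1 := fun c => by rw [← map_smul, smul_eq_mul, mul_one]
    constructor
    · intro h
      have := LinearMap.congr_fun (congrArg ModuleCat.Hom.hom h) (μ 1)
      rw [e]
      exact this
    · intro h
      refine ModuleCat.hom_ext (LinearMap.ext fun a => ?_)
      obtain ⟨c, rfl⟩ := hμ a
      change b • μ c = 0
      rw [e c, smul_comm, ← e b, h, smul_zero]
  have tinj : ∀ m (α : Ext (ModuleCat.of S Z) (ModuleCat.of S Z) (m + 1)),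
      t.comp α (Nat.add_comm 2 (m + 1)) = 0 → α = 0 := by
    intro m α h
    have e : t.comp α (Nat.add_comm 2 (m + 1)) =
      δ2.comp (δ1.comp α (rfl : _ = 1 + (m + 1))) (by omega) :=
      Ext.comp_assoc _ _ _ _ _ (by omega)
    rw [e] at h
    exact shift_inj h1 (by omega) _ _ (shift_inj h2 (by omega) _ _ h)
  have tsurj : ∀ m (β : Ext (ModuleCat.of S Z) (ModuleCat.of S Z) (m + 2)),
      ∃ α, t.comp α (Nat.add_comm 2 m) = β := by
    intro m β
    obtain ⟨γ, rfl⟩ := shift_surj h2 (show 1 + (1 + m) = m + 2 by omega) β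
    obtain ⟨α, rfl⟩ := shift_surj h1 (show 1 + m = 1 + m by omega) γ
    exact ⟨α, Ext.comp_assoc _ _ _ _ _ (by omega)⟩
  have s0 : ∀ b : S, b • t = 0 ↔ d ∣ w * b := by
    intro b
    have e : b • t = δ2.comp (δ1.comp (Ext.mk₀ (b • 𝟙 (ModuleCat.of S Z))) (add_zero 1)) rfl := by
      rw [Ext.mk₀_smul, Ext.comp_smul, Ext.comp_smul, Ext.comp_mk₀_id]
    have e2 : b • t = 0 ↔ δ1.comp (Ext.mk₀ (b • 𝟙 (ModuleCat.of S Z))) (add_zero 1) = 0 := by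
      rw [e]
      constructor
      · exact shift_inj h2 le_rfl _ _
      · intro h; rw [h, Ext.comp_zero]
    have e3 := shift_zero h1 (b • 𝟙 (ModuleCat.of S Z))
    rw [e2, hwN]
    refine e3.trans ?_
    constructor
    · rintro ⟨h, hh⟩
      have := LinearMap.congr_fun (congrArg ModuleCat.Hom.hom hh) (μ 1)
      change h.hom (i1 (μ 1)) = b • μ 1 at this
      obtain ⟨c, hc⟩ := hμ (h.hom (1 : S))
      refine ⟨c, ?_⟩
      rw [← hμd, map_sub, sub_eq_zero]
      have e4 : h.hom (N * 1 : S) = N • h.hom (1 : S) := map_smul h.hom N (1 : S)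
      rw [hi1, ← map_smul, smul_eq_mul, mul_one b, e4] at this
      rw [← this, ← smul_eq_mul N c, map_smul, hc]
    · rintro ⟨c, hc⟩
      refine ⟨ModuleCat.ofHom (μ ∘ₗ mul c), ?_⟩
      refine ModuleCat.hom_ext (LinearMap.ext fun a => ?_)
      obtain ⟨r, rfl⟩ := hμ a
      change μ (c * i1 (μ r)) = b • μ r
      rw [hi1, ← map_smul, ← sub_eq_zero, ← map_sub, hμd, dvd_sub_comm]
      convert hc.mul_right r using 1
      rw [smul_eq_mul]; ring
  have s1 : ∀ b : S, b • u = 0 ↔ d ∣ w * b := by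
    intro b
    have e : b • u = δ2.comp (Ext.mk₀ (b • ModuleCat.ofHom κ)) (add_zero 1) := by
      rw [Ext.mk₀_smul, Ext.comp_smul]
    rw [e]
    refine (shift_zero h2 (b • ModuleCat.ofHom κ)).trans ?_
    rw [← hμd]
    constructor
    · rintro ⟨h, hh⟩
      have := LinearMap.congr_fun (congrArg ModuleCat.Hom.hom hh) (π 1)
      change h.hom (i2 (π 1)) = b • κ (π 1) at this
      have e4 : h.hom (d * 1 : S) = d • h.hom (1 : S) := map_smul h.hom d (1 : S)
      rw [hi2, hκ, e4, ← map_smul μ b] at this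
      obtain ⟨c, hc⟩ := hμ (h.hom (1 : S))
      rw [smul_eq_mul, mul_one, mul_comm b w] at this
      rw [← this, ← hc, ← map_smul, hμd]
      exact dvd_mul_right _ _
    · intro h
      refine ⟨0, ?_⟩
      refine ModuleCat.hom_ext (LinearMap.ext fun a => ?_)
      obtain ⟨r, rfl⟩ := hπ a
      change 0 = b • κ (π r)
      rw [hκ, ← map_smul, eq_comm, hμd]
      rw [hμd] at h
      convert h.mul_right r using 1
      rw [smul_eq_mul]; ring
  have usurj : ∀ (β : Ext (ModuleCat.of S Z) (ModuleCat.of S Z) 1), ∃ b : S, b • u = β := by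
    intro β
    obtain ⟨γ, rfl⟩ := shift_surj h2 (add_zero 1) β
    obtain ⟨f, rfl⟩ := (Ext.mk₀_bijective _ _).2 γ
    have hf : ∃ b : S, b • ModuleCat.ofHom κ = f := by
      obtain ⟨r, hr⟩ := hμ (f.hom (π 1))
      have e : ∀ c, π c = c • π 1 := fun c => by rw [← map_smul, smul_eq_mul, mul_one]
      have hN0 : d ∣ N * r := by
        rw [← hμd, ← smul_eq_mul, map_smul, hr, ← map_smul, ← e, (hπN N).2 dvd_rfl, map_zero]
      obtain ⟨c, hc⟩ := (hNw r).1 hN0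
      refine ⟨c, ModuleCat.hom_ext (LinearMap.ext fun a => ?_)⟩
      obtain ⟨s, rfl⟩ := hπ a
      change c • κ (π s) = f.hom (π s)
      rw [e s, map_smul, map_smul, ← hr, hκ, smul_comm]
      congr 1
      rw [← map_smul, ← sub_eq_zero, ← map_sub, hμd, dvd_sub_comm]
      convert hc using 2
      rw [smul_eq_mul, mul_one]
      ring
    obtain ⟨b, rfl⟩ := hf
    exact ⟨b, by rw [Ext.mk₀_smul, Ext.comp_smul]⟩
  refine ⟨gen t u, rfl, ?_, ?_, ?_, gen_mul t u huu hut⟩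
  · intro m
    induction m using Nat.twoStepInduction with
    | zero =>
      intro α
      obtain ⟨f, rfl⟩ := (Ext.mk₀_bijective _ _).2 α
      obtain ⟨b, rfl⟩ := hom0 f
      exact ⟨b, by rw [gen, Ext.mk₀_smul]⟩
    | one => exact usurj
    | more m ih _ =>
      intro β
      obtain ⟨α, rfl⟩ := tsurj m β
      obtain ⟨b, rfl⟩ := ih α
      exact ⟨b, by rw [gen, Ext.comp_smul]⟩
  · intro b
    rw [gen, ← Ext.mk₀_smul, Ext.mk₀_eq_zero_iff, hid]
  · intro m
    induction m using Nat.twoStepInduction with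
    | zero => exact s1
    | one =>
      intro b
      rw [← s0]
      change b • t.comp (Ext.mk₀ (𝟙 _)) (add_zero 2) = 0 ↔ _
      rw [Ext.comp_mk₀_id]
    | more m ih _ =>
      intro b
      rw [← ih]
      change b • t.comp (gen t u (m + 1)) _ = 0 ↔ _
      rw [← Ext.comp_smul]
      constructor
      · exact tinj _ _
      · intro h; rw [h, Ext.comp_zero]

end abstractExt

end HHAux


namespace HHAux

section target
variable (k : Type) [Field k] (n : ℕ)

def xx : R k n := Ideal.Quotient.mk _ (MvPolynomial.X 0)
def uu : R k n := Ideal.Quotient.mk _ (MvPolynomial.X 1)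
def tt : R k n := Ideal.Quotient.mk _ (MvPolynomial.X 2)

lemma xx_pow : xx k n ^ (n + 1) = 0 := by
  rw [xx, ← map_pow, Ideal.Quotient.eq_zero_iff_mem]
  exact Ideal.subset_span (by simp)

lemma uu_sq : uu k n * uu k n = 0 := by
  rw [uu, ← map_mul, Ideal.Quotient.eq_zero_iff_mem, ← sq]
  exact Ideal.subset_span (by simp)

lemma xx_tt : xx k n ^ n * tt k n = 0 := by
  rw [xx, tt, ← map_pow, ← map_mul, Ideal.Quotient.eq_zero_iff_mem]
  exact Ideal.subset_span (by simp)

lemma xx_uu : xx k n ^ n * uu k n = 0 := by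
  rw [xx, uu, ← map_pow, ← map_mul, Ideal.Quotient.eq_zero_iff_mem, mul_comm]
  exact Ideal.subset_span (by simp)

/-- polynomial representatives of the generators -/
def hpoly : ℕ → MvPolynomial (Fin 3) k
  | 0 => 1
  | 1 => MvPolynomial.X 1
  | (m + 2) => MvPolynomial.X 2 * hpoly m

def hh (m : ℕ) : R k n := Ideal.Quotient.mk _ (hpoly k m)

lemma hh_zero : hh k n 0 = 1 := by simp [hh, hpoly]
lemma hh_one : hh k n 1 = uu k n := by simp [hh, hpoly, uu]
lemma hh_add (m : ℕ) : hh k n (m + 2) = tt k n * hh k n m := by simp [hh, hpoly, tt]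

lemma hh_one_mul : ∀ b : ℕ, uu k n * hh k n b = if Odd b then 0 else hh k n (1 + b)
  | 0 => by simp [hh_zero, hh_one]
  | 1 => by simp [hh_one, uu_sq]
  | (b + 2) => by
    have e : Odd (b + 2) ↔ Odd b := by grind
    rw [hh_add, mul_left_comm, hh_one_mul b, ← add_assoc, hh_add]
    simp only [e]
    split_ifs <;> simp

lemma hh_mul (b : ℕ) : ∀ a : ℕ, hh k n a * hh k n b =
    if Odd a ∧ Odd b then 0 else hh k n (a + b)
  | 0 => by simp [hh_zero]
  | 1 => by simpa [hh_one] using hh_one_mul k n b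
  | (a + 2) => by
    have e : Odd (a + 2) ↔ Odd a := by grind
    rw [hh_add, mul_assoc, hh_mul b a, add_right_comm, hh_add]
    simp only [e]
    split_ifs <;> simp

lemma hh_pow (a : ℕ) : ∀ c : ℕ, hh k n (a + 2 * c) = tt k n ^ c * hh k n a
  | 0 => by simp
  | (c + 1) => by
    rw [mul_add, ← add_assoc, mul_one, hh_add, hh_pow a c, pow_succ']
    ring

lemma xx_hh : ∀ m : ℕ, xx k n ^ n * hh k n (m + 1) = 0
  | 0 => by rw [zero_add, hh_one, xx_uu]
  | (m + 1) => by rw [hh_add, ← mul_assoc, xx_tt, zero_mul]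

lemma hpoly_hom : ∀ m, MvPolynomial.IsWeightedHomogeneous (![0, 1, 2] : Fin 3 → ℕ) (hpoly k m) m
  | 0 => MvPolynomial.isWeightedHomogeneous_one _ _
  | 1 => by
    have := MvPolynomial.isWeightedHomogeneous_X k (![0, 1, 2] : Fin 3 → ℕ) 1
    simpa [hpoly] using this
  | (m + 2) => by
    have := MvPolynomial.isWeightedHomogeneous_X k (![0, 1, 2] : Fin 3 → ℕ) 2
    have := this.mul (hpoly_hom m)
    rw [show (![0, 1, 2] : Fin 3 → ℕ) 2 + m = m + 2 from Nat.add_comm 2 m] at this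
    exact this

lemma aeval_hom (q : k[X]) : MvPolynomial.IsWeightedHomogeneous (![0, 1, 2] : Fin 3 → ℕ)
    (aeval (MvPolynomial.X 0 : MvPolynomial (Fin 3) k) q) 0 := by
  induction q using Polynomial.induction_on' with
  | add p q hp hq => rw [map_add]; exact hp.add hq
  | monomial i a =>
    rw [aeval_monomial]
    have h1 := MvPolynomial.isWeightedHomogeneous_C (![0, 1, 2] : Fin 3 → ℕ) a
    have h2 := (MvPolynomial.isWeightedHomogeneous_X k (![0, 1, 2] : Fin 3 → ℕ) 0).pow i
    have := h1.mul h2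
    simpa using this

/-- The map `q ↦ q(x) h_m`. -/
def psi (m : ℕ) : k[X] →ₗ[k] R k n :=
  LinearMap.mulRight k (hh k n m) ∘ₗ (aeval (xx k n)).toLinearMap

lemma psi_apply (m : ℕ) (q : k[X]) : psi k n m q = aeval (xx k n) q * hh k n m := rfl

lemma psi_mem (m : ℕ) (q : k[X]) : psi k n m q ∈ G k n m := by
  refine ⟨aeval (MvPolynomial.X 0 : MvPolynomial (Fin 3) k) q * hpoly k m, ?_, ?_⟩
  · have := (aeval_hom k q).mul (hpoly_hom k m)
    rw [zero_add] at this
    exact this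
  · rw [psi_apply]
    change Ideal.Quotient.mkₐ k (I k n) _ = _
    rw [map_mul, ← Polynomial.aeval_algHom_apply]
    rfl

lemma psi_surj (m : ℕ) (y : R k n) (hy : y ∈ G k n m) : y ∈ LinearMap.range (psi k n m) := by
  obtain ⟨P, hP, rfl⟩ := hy
  have hP : MvPolynomial.IsWeightedHomogeneous (![0, 1, 2] : Fin 3 → ℕ) P m := hP
  rw [← MvPolynomial.support_sum_monomial_coeff P, map_sum]
  refine Submodule.sum_mem _ fun s hs => ?_
  have hw := hP (MvPolynomial.mem_support_iff.1 hs)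
  have hw : m = s 1 + 2 * s 2 := by
    rw [← hw, Finsupp.weight_apply, Finsupp.sum_fintype _ _ (by simp)]
    simp [Fin.sum_univ_three]
    omega
  generalize MvPolynomial.coeff s P = c
  have e : (Ideal.Quotient.mkₐ k (I k n)).toLinearMap (MvPolynomial.monomial s c) =
      algebraMap k (R k n) c * (xx k n ^ s 0 * uu k n ^ s 1 * tt k n ^ s 2) := by
    rw [MvPolynomial.monomial_eq, Finsupp.prod_fintype _ _ (by simp), Fin.prod_univ_three]
    change Ideal.Quotient.mkₐ k (I k n) _ = _
    simp only [map_mul, map_pow]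
    rfl
  rw [e]
  by_cases h2 : 2 ≤ s 1
  · obtain ⟨j, hj⟩ := Nat.exists_eq_add_of_le' h2
    have : uu k n ^ s 1 = 0 := by rw [hj, pow_add, sq, uu_sq, mul_zero]
    rw [this]
    simp
  · have h3 : uu k n ^ s 1 = hh k n (s 1) := by
      have : s 1 = 0 ∨ s 1 = 1 := by omega
      rcases this with h | h <;> simp [h, hh_zero, hh_one]
    refine ⟨C c * X ^ s 0, ?_⟩
    rw [psi_apply, hw, hh_pow, h3]
    simp
    ring

lemma psi_ker_zero (q : k[X]) : psi k n 0 q = 0 ↔ X ^ (n + 1) ∣ q := by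
  rw [psi_apply, hh_zero, mul_one]
  constructor
  · intro h
    let f : R k n →ₐ[k] A k n := Ideal.Quotient.liftₐ (I k n)
      (MvPolynomial.aeval ![AdjoinRoot.root _, 0, 0]) (by
        have h0 : AdjoinRoot.root ((X : k[X]) ^ (n + 1)) ^ (n + 1) = 0 := by
          have := AdjoinRoot.eval₂_root ((X : k[X]) ^ (n + 1))
          simpa using this
        intro a ha
        have : I k n ≤ RingHom.ker (MvPolynomial.aeval (R := k)
            ![AdjoinRoot.root ((X : k[X]) ^ (n + 1)), 0, 0]) := by
          refine Ideal.span_le.2 ?_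
          rintro _ (rfl | rfl | rfl | rfl) <;> simp [RingHom.mem_ker, h0]
        exact this ha)
    have hf : f (xx k n) = AdjoinRoot.root _ := by
      change MvPolynomial.aeval _ (MvPolynomial.X 0) = _
      simp
    have := congrArg f h
    rw [← Polynomial.aeval_algHom_apply, hf, map_zero, AdjoinRoot.aeval_eq,
      AdjoinRoot.mk_eq_zero] at this
    exact this
  · rintro ⟨c, rfl⟩
    rw [map_mul, map_pow, aeval_X, xx_pow, zero_mul]

lemma psi_ker_succ (m : ℕ) (q : k[X]) : psi k n (m + 1) q = 0 ↔ X ^ n ∣ q := by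
  rw [psi_apply]
  constructor
  · intro h
    let D := DualNumber (AdjoinRoot ((X : k[X]) ^ n))[X]
    let r := AdjoinRoot.root ((X : k[X]) ^ n)
    have h0 : r ^ n = 0 := by
      have := AdjoinRoot.eval₂_root ((X : k[X]) ^ n)
      simpa using this
    let xd : D := TrivSqZeroExt.inl (C r)
    let ud : D := TrivSqZeroExt.inr 1
    let td : D := TrivSqZeroExt.inl X
    have hxd : xd ^ n = 0 := by
      have e : xd ^ n = TrivSqZeroExt.inl (C r ^ n) := TrivSqZeroExt.inl_pow _ _
      rw [e, ← C_pow, h0, C_0, TrivSqZeroExt.inl_zero]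
    have hud : ud ^ 2 = 0 := by
      rw [sq]; exact TrivSqZeroExt.inr_mul_inr _ _ _
    let f : R k n →ₐ[k] D := Ideal.Quotient.liftₐ (I k n)
      (MvPolynomial.aeval ![xd, ud, td]) (by
        intro a ha
        have : I k n ≤ RingHom.ker (MvPolynomial.aeval (R := k) ![xd, ud, td]) := by
          refine Ideal.span_le.2 ?_
          rintro _ (rfl | rfl | rfl | rfl) <;> simp [RingHom.mem_ker, hxd, pow_succ]
          simpa [sq] using hud
        exact this ha)
    have hfx : f (xx k n) = xd := by
      change MvPolynomial.aeval _ (MvPolynomial.X 0) = _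
      simp
    have hfu : f (uu k n) = ud := by
      change MvPolynomial.aeval _ (MvPolynomial.X 1) = _
      simp
    have hft : f (tt k n) = td := by
      change MvPolynomial.aeval _ (MvPolynomial.X 2) = _
      simp
    have hfh : ∀ m, ∃ j, f (hh k n m) = TrivSqZeroExt.inl (X ^ j) ∨
        f (hh k n m) = TrivSqZeroExt.inr (X ^ j) := by
      intro m
      induction m using Nat.twoStepInduction with
      | zero => exact ⟨0, Or.inl (by simp [hh_zero])⟩
      | one => exact ⟨0, Or.inr (by rw [hh_one, hfu, pow_zero])⟩
      | more m ih _ =>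
        obtain ⟨j, hj | hj⟩ := ih
        · refine ⟨j + 1, Or.inl ?_⟩
          rw [hh_add, map_mul, hft, hj, ← TrivSqZeroExt.inl_mul, ← pow_succ']
        · refine ⟨j + 1, Or.inr ?_⟩
          rw [hh_add, map_mul, hft, hj, TrivSqZeroExt.inl_mul_inr, smul_eq_mul, ← pow_succ']
    have hq : aeval xd q = TrivSqZeroExt.inl (C (AdjoinRoot.mk _ q)) := by
      have e : xd = (TrivSqZeroExt.inlAlgHom k (AdjoinRoot ((X : k[X]) ^ n))[X]
        (AdjoinRoot ((X : k[X]) ^ n))[X]) (C r) := rfl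
      have e2 : C r = (IsScalarTower.toAlgHom k (AdjoinRoot ((X : k[X]) ^ n))
        (AdjoinRoot ((X : k[X]) ^ n))[X]) r := rfl
      rw [e, Polynomial.aeval_algHom_apply, e2, Polynomial.aeval_algHom_apply, AdjoinRoot.aeval_eq]
      rfl
    have := congrArg f h
    rw [map_zero, map_mul, ← Polynomial.aeval_algHom_apply, hfx, hq] at this
    rw [← AdjoinRoot.mk_eq_zero]
    obtain ⟨j, hj | hj⟩ := hfh (m + 1)
    · rw [hj, ← TrivSqZeroExt.inl_mul] at this
      have := congrArg TrivSqZeroExt.fst this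
      have := congrArg (fun p => coeff p j) this
      simpa using this
    · rw [hj, TrivSqZeroExt.inl_mul_inr] at this
      have := congrArg TrivSqZeroExt.snd this
      have := congrArg (fun p => coeff p j) this
      simpa using this
  · rintro ⟨c, rfl⟩
    rw [map_mul, map_pow, aeval_X, mul_right_comm, xx_hh, zero_mul]

end target

lemma exists_equiv {P E F : Type*} [AddCommGroup P] [AddCommGroup E] [AddCommGroup F]
    (φ : P →+ E) (ψ : P →+ F) (hφ : Function.Surjective φ) (hψ : Function.Surjective ψ)
    (h : ∀ q, φ q = 0 ↔ ψ q = 0) : ∃ e : E ≃+ F, ∀ q, e (φ q) = ψ q := by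
  have hk : φ.ker = ψ.ker := by
    ext q; exact h q
  refine ⟨(QuotientAddGroup.quotientKerEquivOfSurjective φ hφ).symm.trans
    ((QuotientAddGroup.quotientAddEquivOfEq hk).trans
      (QuotientAddGroup.quotientKerEquivOfSurjective ψ hψ)), fun q => ?_⟩
  have : (QuotientAddGroup.quotientKerEquivOfSurjective φ hφ).symm (φ q) =
      (q : P ⧸ φ.ker) := by
    rw [AddEquiv.symm_apply_eq]; rfl
  rw [AddEquiv.trans_apply, this]
  rfl

end HHAux

/-- for a field `k` of odd prime characteristic `p` with `p ∤ n+1`, the graded ring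
`HH^*(A;A) = ⊕ₘ Ext^m_B(A,A)` with the Yoneda (composition) product is isomorphic as a
graded ring to `k[x,u,t]/(x^{n+1}, u², xⁿt, uxⁿ)` with `x, u, t` in degrees `0, 1, 2`. -/
theorem stmt9 (k : Type) [Field k] (p : ℕ) (hp : p.Prime) (hp2 : p ≠ 2) [CharP k p]
    (n : ℕ) (hn : 1 ≤ n) (hpn : ¬ p ∣ (n + 1)) :
    ∃ e : ∀ m : ℕ, Abelian.Ext (M k n) (M k n) m ≃+ G k n m,
      ((e 0 (Abelian.Ext.mk₀ (𝟙 (M k n))) : R k n) = 1) ∧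
      ∀ (a b : ℕ) (α : Abelian.Ext (M k n) (M k n) a) (β : Abelian.Ext (M k n) (M k n) b),
        ((e (a + b) (α.comp β rfl) : R k n) = (e a α : R k n) * (e b β : R k n)) := by
  have hkp : ∀ m : ℕ, (m : k) = 0 ↔ p ∣ m := fun m => CharP.cast_eq_zero_iff k p m
  have h2 : (2 : k) ≠ 0 := by
    intro h
    have h22 : ((2 : ℕ) : k) = 0 := by exact_mod_cast h
    exact hp2 ((Nat.prime_dvd_prime_iff_eq hp Nat.prime_two).1 ((hkp 2).1 h22))
  have hn1 : ((n + 1 : ℕ) : k) ≠ 0 := fun h => hpn ((hkp _).1 h)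
  obtain ⟨N, v, c1, c2, c3, c4, c5, c6⟩ := HHAux.concrete k n hn h2 hn1
  have key : ∃ g : ∀ m, Abelian.Ext (M k n) (M k n) m,
      g 0 = Abelian.Ext.mk₀ (𝟙 _) ∧ (∀ m α, ∃ b : B k n, b • g m = α) ∧
      (∀ b : B k n, b • g 0 = 0 ↔ HHAux.dd k n ∣ b) ∧
      (∀ m, ∀ b : B k n, b • g (m + 1) = 0 ↔
        HHAux.dd k n ∣ HHAux.Psi k n (C (HHAux.rt k n)) * b) ∧
      ∀ a b c (h : a + b = c), (g a).comp (g b) h = if Odd a ∧ Odd b then 0 else g c :=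
    HHAux.ext_struct (HHAux.dd k n) N (HHAux.Psi k n (C (HHAux.rt k n))) v c1 c2 c3
      (HHAux.mu k n) (HHAux.mu_surj k n) (HHAux.mu_ker k n) c4 c5 c6
  obtain ⟨g, g0, gsurj, gk0, gk1, gmul⟩ := key
  let ι : k[X] →+* B k n := ((HHAux.Psi k n).comp C).comp (AdjoinRoot.mk _)
  have muι : ∀ q, HHAux.mu k n (ι q) = AdjoinRoot.mk _ q := by
    intro q
    change HHAux.mu k n (HHAux.Psi k n (C _)) = _
    rw [HHAux.mu_Psi, eval_C]
  have kill : ∀ m, ∀ b : B k n, HHAux.dd k n ∣ b → b • g m = 0 := by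
    intro m b hb
    cases m with
    | zero => exact (gk0 b).2 hb
    | succ m => exact (gk1 m b).2 (hb.mul_left _)
  let φ : ∀ m, k[X] →+ Abelian.Ext (M k n) (M k n) m := fun m =>
    (LinearMap.toSpanSingleton (B k n) _ (g m)).toAddMonoidHom.comp ι.toAddMonoidHom
  have φ_apply : ∀ m q, φ m q = ι q • g m := fun _ _ => rfl
  let ψ : ∀ m, k[X] →+ G k n m := fun m =>
    ((HHAux.psi k n m).codRestrict (G k n m) (HHAux.psi_mem k n m)).toAddMonoidHom
  have ψ_apply : ∀ m q, ((ψ m q : G k n m) : R k n) = HHAux.psi k n m q := fun _ _ => rfl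
  have φsurj : ∀ m, Function.Surjective (φ m) := by
    intro m α
    obtain ⟨b, rfl⟩ := gsurj m α
    obtain ⟨q, hq⟩ := AdjoinRoot.mk_surjective (HHAux.mu k n b)
    refine ⟨q, ?_⟩
    rw [φ_apply, ← sub_eq_zero, ← sub_smul]
    apply kill
    rw [← HHAux.mu_ker, map_sub, muι, hq, sub_self]
  have ψsurj : ∀ m, Function.Surjective (ψ m) := by
    rintro m ⟨y, hy⟩
    obtain ⟨q, hq⟩ := HHAux.psi_surj k n m y hy
    exact ⟨q, Subtype.ext hq⟩
  have hker : ∀ m q, φ m q = 0 ↔ ψ m q = 0 := by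
    intro m q
    rw [φ_apply, ← Subtype.coe_inj, ψ_apply]
    change _ ↔ _ = 0
    cases m with
    | zero =>
      rw [gk0, HHAux.psi_ker_zero, ← HHAux.mu_ker, muι, AdjoinRoot.mk_eq_zero]
    | succ m =>
      rw [gk1, HHAux.psi_ker_succ, ← HHAux.mu_ker, HHAux.mu_mul, muι, HHAux.mu_Psi, eval_C,
        HHAux.rt, ← AdjoinRoot.mk_X, ← map_mul, AdjoinRoot.mk_eq_zero, pow_succ',
        mul_dvd_mul_iff_left X_ne_zero]
  choose e he using fun m => HHAux.exists_equiv (φ m) (ψ m) (φsurj m) (ψsurj m) (hker m)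
  refine ⟨e, ?_, ?_⟩
  · have h1 : Abelian.Ext.mk₀ (𝟙 (M k n)) = φ 0 1 := by
      rw [φ_apply, map_one, one_smul, g0]
    rw [h1, he, ψ_apply, HHAux.psi_apply, map_one, one_mul, HHAux.hh_zero]
  · intro a b α β
    obtain ⟨q, rfl⟩ := φsurj a α
    obtain ⟨s, rfl⟩ := φsurj b β
    rw [he, he, ψ_apply, ψ_apply, HHAux.psi_apply, HHAux.psi_apply, mul_mul_mul_comm,
      HHAux.hh_mul, φ_apply, φ_apply, Abelian.Ext.smul_comp, Abelian.Ext.comp_smul, gmul,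
      smul_smul, ← map_mul, ← map_mul]
    split_ifs
    · rw [smul_zero, map_zero, mul_zero]; rfl
    · rw [← φ_apply, he, ψ_apply, HHAux.psi_apply]

end
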